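/- arXiv:1110.1554 — 3 statements merged into one kernel-verified Lean document; each statement's English description precedes it below -/
import Mathlib

section
/- Let θ = log 5 / log 2. Let α, η : ℕ → ℝ be sequences such that there is a constant c > 0 with 0 < α_j ≤ c (j!)^{−θ} for all j ≥ 0, and such that for every r > 1 there is a constant C_r > 0 with |η_j| ≤ C_r r^{−j} for all j ≥ 0. Define N_j = 2 Σ_{l=0}^{j} (α_{j−l} η_{j+l+1} − α_{j+l+1} η_{j−l}). Then for every s > 1 there exists a constant C > 0 such that |N_j| ≤ C s^{−j} for all j ≥ 0; in particular N_j → 0 as j → ∞. (This abstracts the decay estimate of Theorem 3.2: with α_j = P_{j1}(q_1) and η_j = ∂_n P_{j1}(q_1), one has ‖P_{j1}‖²_{L²} = N_j, so the norms ‖p_j‖ of the orthogonal polynomials tend to 0 at least exponentially fast.) -/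
open scoped BigOperators

/-- A negative power of `j!` with exponent at most `-1` decays faster than any geometric
sequence. -/
lemma factorial_rpow_neg_le {θ : ℝ} (hθ : 1 ≤ θ) {r : ℝ} (hr : 0 < r) (j : ℕ) :
    (Nat.factorial j : ℝ) ^ (-θ) ≤ Real.exp r * (r ^ j)⁻¹ := by
  have hf : (1 : ℝ) ≤ (Nat.factorial j : ℝ) := by exact_mod_cast Nat.factorial_pos j
  calc (Nat.factorial j : ℝ) ^ (-θ) ≤ (Nat.factorial j : ℝ) ^ (-1 : ℝ) :=
        Real.rpow_le_rpow_of_exponent_le hf (by linarith)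
    _ = r ^ j / (Nat.factorial j : ℝ) * (r ^ j)⁻¹ := by
        rw [Real.rpow_neg_one]
        field_simp
    _ ≤ Real.exp r * (r ^ j)⁻¹ := by
        gcongr
        exact Real.pow_div_factorial_le_exp r hr.le j

/-- If `a` and `b` are bounded by multiples of `r ^ (-j)`, the antisymmetrized convolution sums
over pairs of indices adding up to `2 * j + 1` are bounded by a multiple of
`(j + 1) * r ^ (-(2 * j + 1))`. -/
lemma abs_sum_mul_sub_mul_le {a b : ℕ → ℝ} {A B r : ℝ} (hA : 0 ≤ A) (hr : 0 < r)
    (ha : ∀ j, |a j| ≤ A * (r ^ j)⁻¹) (hb : ∀ j, |b j| ≤ B * (r ^ j)⁻¹) (j : ℕ) :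
    |∑ l ∈ Finset.range (j + 1), (a (j - l) * b (j + l + 1) - a (j + l + 1) * b (j - l))|
      ≤ (j + 1) * (2 * (A * B * (r ^ (2 * j + 1))⁻¹)) := by
  have hmul : ∀ m n, m + n = 2 * j + 1 → |a m * b n| ≤ A * B * (r ^ (2 * j + 1))⁻¹ := by
    intro m n hmn
    calc |a m * b n| = |a m| * |b n| := abs_mul _ _
      _ ≤ (A * (r ^ m)⁻¹) * (B * (r ^ n)⁻¹) :=
          mul_le_mul (ha m) (hb n) (abs_nonneg _) (by positivity)
      _ = A * B * (r ^ (2 * j + 1))⁻¹ := by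
          rw [← hmn, pow_add, mul_inv]
          ring
  have hterm : ∀ l ∈ Finset.range (j + 1),
      |a (j - l) * b (j + l + 1) - a (j + l + 1) * b (j - l)|
        ≤ 2 * (A * B * (r ^ (2 * j + 1))⁻¹) := by
    intro l hl
    have hlj : l ≤ j := Nat.lt_succ_iff.mp (Finset.mem_range.mp hl)
    have h₁ := hmul (j - l) (j + l + 1) (by omega)
    have h₂ := hmul (j + l + 1) (j - l) (by omega)
    linarith [abs_sub (a (j - l) * b (j + l + 1)) (a (j + l + 1) * b (j - l))]
  calc _ ≤ ∑ l ∈ Finset.range (j + 1),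
        |a (j - l) * b (j + l + 1) - a (j + l + 1) * b (j - l)| := Finset.abs_sum_le_sum_abs _ _
    _ ≤ (Finset.range (j + 1)).card • (2 * (A * B * (r ^ (2 * j + 1))⁻¹)) :=
        Finset.sum_le_card_nsmul _ _ _ hterm
    _ = _ := by simp

/-- The factor `j + 1` is absorbed by doubling the ratio of a geometric sequence. -/
lemma succ_mul_inv_two_mul_pow_le {s : ℝ} (hs : 1 ≤ s) (j : ℕ) :
    ((j : ℝ) + 1) * ((2 * s) ^ (2 * j + 1))⁻¹ ≤ (s ^ j)⁻¹ := by
  have hs0 : 0 < s := by linarith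
  have h2 : (j : ℝ) + 1 ≤ 2 ^ (2 * j + 1) := by
    have h : j + 1 ≤ 2 ^ (2 * j + 1) :=
      (Nat.lt_two_pow_self (n := j + 1)).le.trans (Nat.pow_le_pow_right two_pos (by omega))
    exact_mod_cast h
  have hsj : s ^ j ≤ s ^ (2 * j + 1) := pow_le_pow_right₀ hs (by omega)
  rw [← div_eq_mul_inv, div_le_iff₀ (by positivity), inv_mul_eq_div, le_div_iff₀ (by positivity),
    mul_pow]
  exact mul_le_mul h2 hsj (by positivity) (by positivity)

/-- Abstract decay estimate from Theorem 3.2. If `0 < α_j ≤ c (j!)^{-log 5/log 2}` and for every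
`r > 1`, `|η_j| ≤ C_r r^{-j}`, and `N_j = 2 Σ_{l=0}^{j} (α_{j-l} η_{j+l+1} - α_{j+l+1} η_{j-l})`,
then for every `s > 1` there is `C > 0` with `|N_j| ≤ C s^{-j}`; in particular `N_j → 0`. -/
theorem abstract_decay_estimate (α η N : ℕ → ℝ)
    (hα : ∃ c : ℝ, 0 < c ∧ ∀ j : ℕ,
      0 < α j ∧ α j ≤ c * (Nat.factorial j : ℝ) ^ (-(Real.log 5 / Real.log 2)))
    (hη : ∀ r : ℝ, 1 < r → ∃ C : ℝ, 0 < C ∧ ∀ j : ℕ, |η j| ≤ C * r ^ (-(j : ℝ)))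
    (hN : ∀ j : ℕ, N j = 2 * ∑ l ∈ Finset.range (j + 1),
      (α (j - l) * η (j + l + 1) - α (j + l + 1) * η (j - l))) :
    (∀ s : ℝ, 1 < s → ∃ C : ℝ, 0 < C ∧ ∀ j : ℕ, |N j| ≤ C * s ^ (-(j : ℝ))) ∧
      Filter.Tendsto N Filter.atTop (nhds 0) := by
  have hθ : 1 ≤ Real.log 5 / Real.log 2 := by
    rw [le_div_iff₀ (Real.log_pos one_lt_two), one_mul]
    exact Real.log_le_log two_pos (by norm_num)
  obtain ⟨c, hc, hα⟩ := hα
  have hdecay : ∀ s : ℝ, 1 < s → ∃ C : ℝ, 0 < C ∧ ∀ j : ℕ, |N j| ≤ C * s ^ (-(j : ℝ)) := by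
    intro s hs
    have hr : 0 < 2 * s := by linarith
    obtain ⟨B, hB, hη⟩ := hη (2 * s) (by linarith)
    have ha : ∀ j, |α j| ≤ c * Real.exp (2 * s) * ((2 * s) ^ j)⁻¹ := fun j => by
      rw [abs_of_pos (hα j).1, mul_assoc]
      exact (hα j).2.trans (mul_le_mul_of_nonneg_left (factorial_rpow_neg_le hθ hr j) hc.le)
    have hb : ∀ j, |η j| ≤ B * ((2 * s) ^ j)⁻¹ := fun j => by
      simpa only [Real.rpow_neg hr.le, Real.rpow_natCast] using hη j
    refine ⟨4 * (c * Real.exp (2 * s) * B), by positivity, fun j => ?_⟩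
    rw [hN, abs_mul, abs_two, Real.rpow_neg (by linarith), Real.rpow_natCast]
    calc _ ≤ 2 * ((j + 1) * (2 * (c * Real.exp (2 * s) * B * ((2 * s) ^ (2 * j + 1))⁻¹))) := by
          gcongr
          exact abs_sum_mul_sub_mul_le (by positivity) hr ha hb j
      _ = 4 * (c * Real.exp (2 * s) * B) * ((j + 1) * ((2 * s) ^ (2 * j + 1))⁻¹) := by ring
      _ ≤ _ := by
          gcongr
          exact succ_mul_inv_two_mul_pow_le hs.le j
  refine ⟨hdecay, ?_⟩
  obtain ⟨C, -, hC⟩ := hdecay 2 one_lt_two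
  refine squeeze_zero_norm hC ?_
  have h := (tendsto_pow_atTop_nhds_zero_of_lt_one (r := (2 : ℝ)⁻¹) (by norm_num)
    (by norm_num)).const_mul C
  simpa [Real.rpow_neg, Real.rpow_natCast] using h
end

section
/- Assume in addition that T is a bounded (continuous) linear operator with operator norm ‖T‖. Then for every k ≥ 1, 0 < c_k ≤ ‖T‖². (This is estimate (2.20) of Theorem 3.5.) -/
open scoped RealInnerProductSpace

/-- A vector orthogonal to every element of a set is orthogonal to its linear span. -/
theorem inner_eq_zero_of_mem_span {H : Type*} [NormedAddCommGroup H] [InnerProductSpace ℝ H]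
    {s : Set H} {x v : H} (hs : ∀ u ∈ s, ⟪u, v⟫ = 0) (hx : x ∈ Submodule.span ℝ s) :
    ⟪x, v⟫ = 0 := by
  induction hx using Submodule.span_induction with
  | mem u hu => exact hs u hu
  | zero => exact inner_zero_left v
  | add x y _ _ hx hy => rw [inner_add_left, hx, hy, add_zero]
  | smul a x _ hx => rw [real_inner_smul_left, hx, mul_zero]

/-- If `x - v` is orthogonal to `v`, then `v` is no longer than `x`. -/
theorem norm_le_of_inner_sub_eq_zero {H : Type*} [NormedAddCommGroup H] [InnerProductSpace ℝ H]
    {x v : H} (h : ⟪x - v, v⟫ = 0) : ‖v‖ ≤ ‖x‖ := by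
  have hpyth := norm_add_sq_eq_norm_sq_add_norm_sq_of_inner_eq_zero (x - v) v h
  rw [sub_add_cancel] at hpyth
  nlinarith [norm_nonneg x, norm_nonneg v, mul_self_nonneg ‖x - v‖]

/-- Estimate (2.20) of Theorem 3.5: if moreover `T` is bounded, then `0 < c_k ≤ ‖T‖²`
for every `k ≥ 1`. -/
theorem ck_bounds {H : Type*} [NormedAddCommGroup H] [InnerProductSpace ℝ H]
    (T : H →L[ℝ] H) (hsym : ∀ x y : H, ⟪T x, y⟫ = ⟪x, T y⟫)
    (p : ℕ → H) (hne : ∀ k, p k ≠ 0)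
    (horth : ∀ j k, j ≠ k → ⟪p j, p k⟫ = 0)
    (hspan : ∀ k, T (p k) - p (k + 1) ∈ Submodule.span ℝ (p '' Set.Iic k))
    (b c : ℕ → ℝ)
    (hb : ∀ k, b k = ⟪T (p k), p k⟫ / ‖p k‖ ^ 2)
    (hc : ∀ k, 1 ≤ k → c k = ‖p k‖ ^ 2 / ‖p (k - 1)‖ ^ 2) :
    ∀ k, 1 ≤ k → 0 < c k ∧ c k ≤ ‖T‖ ^ 2 := by
  rintro (_ | k) hk
  · omega
  have hpos : ∀ j, 0 < ‖p j‖ := fun j => norm_pos_iff.mpr (hne j)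
  have hinner : ⟪T (p k) - p (k + 1), p (k + 1)⟫ = 0 := by
    refine inner_eq_zero_of_mem_span ?_ (hspan k)
    rintro _ ⟨j, hj, rfl⟩
    exact horth j (k + 1) (Nat.lt_succ_of_le hj).ne
  have hle : ‖p (k + 1)‖ ≤ ‖T‖ * ‖p k‖ :=
    (norm_le_of_inner_sub_eq_zero hinner).trans (T.le_opNorm (p k))
  rw [hc (k + 1) hk, Nat.add_sub_cancel]
  refine ⟨div_pos (pow_pos (hpos _) 2) (pow_pos (hpos _) 2), ?_⟩
  rw [div_le_iff₀ (pow_pos (hpos k) 2), ← mul_pow]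
  gcongr
end

section
/- Let H be a real inner product space, let a > 0, and let v₀, v₁, v₂ ∈ H satisfy ⟨vᵢ, vᵢ⟩ = a for each i and ⟨vᵢ, vⱼ⟩ = −a/2 for all i ≠ j. Then v₀ + v₁ + v₂ = 0, and {v₀, v₁, v₂} is a tight frame for its span with frame bound (3/2)a: for every x in the linear span of {v₀, v₁, v₂} one has Σ_{i=0}^{2} ⟨x, vᵢ⟩² = (3a/2) ‖x‖², equivalently x = (2/(3a)) Σ_{i=0}^{2} ⟨x, vᵢ⟩ vᵢ. (This is Theorem 4.1 of the paper, with vᵢ the antisymmetric monomials P_{j3}^{(i)} and a = ‖P_{j3}^{(0)}‖²_{L²}.) -/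
open scoped RealInnerProductSpace BigOperators

/-- Theorem 4.1: three vectors with `⟨vᵢ, vᵢ⟩ = a` and `⟨vᵢ, vⱼ⟩ = -a/2` (`i ≠ j`) sum to zero
and form a tight frame for their span with frame bound `(3/2)a`:
`Σᵢ ⟨x, vᵢ⟩² = (3a/2)‖x‖²`, equivalently `x = (2/(3a)) Σᵢ ⟨x, vᵢ⟩ vᵢ`. -/
theorem tight_frame_of_three {H : Type*} [NormedAddCommGroup H] [InnerProductSpace ℝ H]
    (a : ℝ) (ha : 0 < a) (v : Fin 3 → H)
    (hdiag : ∀ i, ⟪v i, v i⟫ = a)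
    (hoff : ∀ i j, i ≠ j → ⟪v i, v j⟫ = -a / 2) :
    v 0 + v 1 + v 2 = 0 ∧
      ∀ x ∈ Submodule.span ℝ (Set.range v),
        (∑ i : Fin 3, ⟪x, v i⟫ ^ 2 = (3 * a / 2) * ‖x‖ ^ 2) ∧
          x = (2 / (3 * a)) • ∑ i : Fin 3, ⟪x, v i⟫ • v i := by
  have gram : ∀ i j, ⟪v i, v j⟫ = (3 * a / 2) * (if i = j then 1 else 0) - a / 2 := by
    intro i j
    split_ifs with h
    · rw [← h, hdiag]; ring
    · rw [hoff i j h]; ring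
  have sum_zero : ∑ i, v i = 0 := by
    rw [← inner_self_eq_zero (𝕜 := ℝ)]
    simp only [sum_inner, inner_sum, gram]
    simp
    ring
  refine ⟨by rw [← Fin.sum_univ_three, sum_zero], fun x hx => ?_⟩
  have expansion : x = (2 / (3 * a)) • ∑ i : Fin 3, ⟪x, v i⟫ • v i := by
    obtain ⟨c, rfl⟩ := (Submodule.mem_span_range_iff_exists_fun ℝ).1 hx
    have coeff : ∀ i, ⟪∑ k, c k • v k, v i⟫ = (3 * a / 2) * c i - a / 2 * ∑ k, c k := by
      intro i
      simp only [sum_inner, real_inner_smul_left, gram, mul_sub, Finset.sum_sub_distrib,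
        Finset.mul_sum]
      simp [mul_comm]
    simp only [coeff, sub_smul, Finset.sum_sub_distrib, ← Finset.smul_sum, mul_smul, sum_zero,
      smul_zero, sub_zero]
    rw [smul_smul, show 2 / (3 * a) * (3 * a / 2) = 1 by field_simp, one_smul]
  refine ⟨?_, expansion⟩
  have norm_sq : ‖x‖ ^ 2 = 2 / (3 * a) * ∑ i : Fin 3, ⟪x, v i⟫ ^ 2 := by
    rw [← real_inner_self_eq_norm_sq]
    conv_lhs => rw [expansion, real_inner_smul_left, sum_inner, ← expansion]
    simp only [real_inner_comm x, real_inner_smul_right, pow_two]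
  rw [norm_sq]
  field_simp
end
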